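/- Let n be an even positive integer and Θ an invertible real skew-symmetric n×n matrix. For all Schwartz functions f, g, h ∈ 𝒮(ℝ^n, ℂ), the Moyal products f ⋆_Θ g and g ⋆_Θ h are again Schwartz functions, and the Moyal product is associative: ((f ⋆_Θ g) ⋆_Θ h)(x) = (f ⋆_Θ (g ⋆_Θ h))(x) for all x ∈ ℝ^n. -/

import Mathlib

open MeasureTheory Real

/-- The Moyal product of two functions on `ℝ^n`, for an invertible deformation
matrix `Θ`. -/
noncomputable def moyal (n : ℕ) (Θ : Matrix (Fin n) (Fin n) ℝ)
    (f g : (Fin n → ℝ) → ℂ) : (Fin n → ℝ) → ℂ := fun x =>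
  (((π ^ n * |Θ.det|)⁻¹ : ℝ) : ℂ) *
    ∫ u : Fin n → ℝ, ∫ v : Fin n → ℝ,
      f (x + u) * g (x + v) *
        Complex.exp (-2 * Complex.I * ((∑ i, u i * Θ⁻¹.mulVec v i : ℝ) : ℂ))

/-!
On `ℝ^n` with a bilinear pairing `L`, the Weyl operators
`(W(u) f)(x) = e^{2πi L(x, u)} f(x + u)` satisfy `W(u) W(s) = e^{2πi L(u, s)} W(u + s)`. Hence the
superpositions `R_H = ∫ H(u) W(u) du` compose by `R_H R_G = R_{G ⊛ H}`, where `⊛` is the convolution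
twisted by `L`. With `ĝ` the Fourier transform of `g` along the pairing, integrating out the second
variable of the Moyal product gives, up to normalization, `f ⋆ g = R_ĝ f`, and `(R_H g)^ = ĝ ⊛ H`;
hence both triple products equal `R_{ĝ ⊛ ĥ} f`. The product is Schwartz because `R_H f` is the
partial integral of the Schwartz function `(x, u) ↦ e^{2πi L(x, u)} H(u) f(x + u)`.
-/

open scoped ContDiff FourierTransform SchwartzMap

section PartialIntegral

variable {E F V : Type*} [NormedAddCommGroup E] [NormedSpace ℝ E] [NormedAddCommGroup F]
  [NormedSpace ℝ F] [NormedAddCommGroup V] [NormedSpace ℝ V]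

lemma norm_compContinuousLinearMap_le_of_norm_le_one {n : ℕ} (A : E [×n]→L[ℝ] F)
    {T : V →L[ℝ] E} (hT : ‖T‖ ≤ 1) : ‖A.compContinuousLinearMap fun _ => T‖ ≤ ‖A‖ :=
  (A.norm_compContinuousLinearMap_le _).trans <| mul_le_of_le_one_right (norm_nonneg _) <|
    Finset.prod_le_one (fun _ _ => norm_nonneg _) fun _ _ => hT

lemma norm_iteratedFDeriv_comp_clm_le {f : E → F} {n : ℕ} (hf : ContDiff ℝ n f) {T : V →L[ℝ] E}
    (hT : ‖T‖ ≤ 1) (x : V) :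
    ‖iteratedFDeriv ℝ n (fun y => f (T y)) x‖ ≤ ‖iteratedFDeriv ℝ n f (T x)‖ := by
  have hcomp := T.iteratedFDeriv_comp_right hf x le_rfl
  simp only [Function.comp_def] at hcomp
  exact hcomp ▸ norm_compContinuousLinearMap_le_of_norm_le_one _ hT

lemma iteratedFDeriv_comp_prodMk_right {Φ : E × V → F} {n : ℕ} (hΦ : ContDiff ℝ n Φ)
    (x : E) (u : V) :
    iteratedFDeriv ℝ n (fun y => Φ (y, u)) x =
      (iteratedFDeriv ℝ n Φ (x, u)).compContinuousLinearMap fun _ => .inl ℝ E V := by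
  have hslice :
      (fun y => Φ (y, u)) = (fun p => Φ (p + (0, u))) ∘ ContinuousLinearMap.inl ℝ E V := by
    ext y
    simp
  have hshift : ContDiff ℝ n fun p => Φ (p + (0, u)) := by fun_prop
  rw [hslice, ContinuousLinearMap.iteratedFDeriv_comp_right _ hshift x le_rfl,
    iteratedFDeriv_comp_add_right]
  simp

lemma norm_iteratedFDeriv_comp_prodMk_right_le {Φ : E × V → F} {n : ℕ} (hΦ : ContDiff ℝ n Φ)
    (x : E) (u : V) :
    ‖iteratedFDeriv ℝ n (fun y => Φ (y, u)) x‖ ≤ ‖iteratedFDeriv ℝ n Φ (x, u)‖ := by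
  rw [iteratedFDeriv_comp_prodMk_right hΦ]
  exact norm_compContinuousLinearMap_le_of_norm_le_one _
    (ContinuousLinearMap.norm_inl_le_one ℝ E V)

lemma continuous_iteratedFDeriv_comp_prodMk_right {Φ : E × V → F} {n : ℕ} (hΦ : ContDiff ℝ n Φ)
    (x : E) : Continuous fun u => iteratedFDeriv ℝ n (fun y => Φ (y, u)) x := by
  simp only [iteratedFDeriv_comp_prodMk_right hΦ]
  exact (ContinuousMultilinearMap.compContinuousLinearMapL
    fun _ : Fin n => ContinuousLinearMap.inl ℝ E V).continuous.comp
      ((hΦ.continuous_iteratedFDeriv le_rfl).comp (by fun_prop))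

lemma exists_pow_mul_norm_iteratedFDeriv_slice_le (Φ : 𝓢(E × V, F)) (k r n : ℕ) :
    ∃ C : ℝ, ∀ x u, ‖x‖ ^ k * ‖iteratedFDeriv ℝ n (fun y => Φ (y, u)) x‖ ≤
      C * (1 + ‖u‖) ^ (-(r : ℝ)) := by
  refine ⟨2 ^ (k + r) * ((Finset.Iic (k + r, n)).sup fun m =>
    SchwartzMap.seminorm ℝ m.1 m.2) Φ, fun x u => ?_⟩
  rw [rpow_neg (by positivity), rpow_natCast, ← div_eq_mul_inv, le_div_iff₀ (by positivity)]
  have hx : ‖x‖ ≤ 1 + ‖(x, u)‖ := (norm_fst_le (x, u)).trans (by linarith)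
  have hu : 1 + ‖u‖ ≤ 1 + ‖(x, u)‖ := by linarith [norm_snd_le (x, u)]
  calc ‖x‖ ^ k * ‖iteratedFDeriv ℝ n (fun y => Φ (y, u)) x‖ * (1 + ‖u‖) ^ r
      ≤ (1 + ‖(x, u)‖) ^ k * ‖iteratedFDeriv ℝ n Φ (x, u)‖ * (1 + ‖(x, u)‖) ^ r := by
        gcongr
        exact norm_iteratedFDeriv_comp_prodMk_right_le (Φ.smooth n) x u
    _ = (1 + ‖(x, u)‖) ^ (k + r) * ‖iteratedFDeriv ℝ n Φ (x, u)‖ := by ring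
    _ ≤ _ := SchwartzMap.one_add_le_sup_seminorm_apply (m := (k + r, n)) le_rfl le_rfl Φ (x, u)

variable [MeasurableSpace V] [OpensMeasurableSpace V] [SecondCountableTopology V]
  (μ : Measure V) [μ.HasTemperateGrowth]

lemma integrable_iteratedFDeriv_slice (Φ : 𝓢(E × V, F)) (n : ℕ) (x : E) :
    Integrable (fun u => iteratedFDeriv ℝ n (fun y => Φ (y, u)) x) μ := by
  obtain ⟨C, hC⟩ := exists_pow_mul_norm_iteratedFDeriv_slice_le Φ 0 μ.integrablePower n
  refine ((μ.integrable_pow_neg_integrablePower).const_mul C).mono'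
    (continuous_iteratedFDeriv_comp_prodMk_right (Φ.smooth n) x).aestronglyMeasurable
    (.of_forall fun u => ?_)
  simpa using hC x u

lemma integral_curryLeft {X : Type*} [MeasurableSpace X] {ν : Measure X} {n : ℕ}
    (A : X → E [×(n + 1)]→L[ℝ] F) : (∫ a, A a ∂ν).curryLeft = ∫ a, (A a).curryLeft ∂ν := by
  have hcurry := ContinuousLinearEquiv.integral_comp_comm (𝕜 := ℝ) (μ := ν)
    (E := E [×(n + 1)]→L[ℝ] F) (F := E →L[ℝ] E [×n]→L[ℝ] F)
    (continuousMultilinearCurryLeftEquiv ℝ (fun _ => E) F).toContinuousLinearEquiv A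
  exact hcurry.symm

lemma hasFDerivAt_integral_iteratedFDeriv_slice (Φ : 𝓢(E × V, F)) (n : ℕ) (x : E) :
    HasFDerivAt (fun x => ∫ u, iteratedFDeriv ℝ n (fun y => Φ (y, u)) x ∂μ)
      (∫ u, iteratedFDeriv ℝ (n + 1) (fun y => Φ (y, u)) x ∂μ).curryLeft x := by
  obtain ⟨C, hC⟩ := exists_pow_mul_norm_iteratedFDeriv_slice_le Φ 0 μ.integrablePower (n + 1)
  have hslice (u : V) : ContDiff ℝ ∞ fun y => Φ (y, u) :=
    (Φ.smooth ⊤).comp (contDiff_prodMk_left u)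
  rw [integral_curryLeft]
  refine hasFDerivAt_integral_of_dominated_of_fderiv_le Filter.univ_mem
    (.of_forall fun y => (integrable_iteratedFDeriv_slice μ Φ n y).aestronglyMeasurable)
    (integrable_iteratedFDeriv_slice μ Φ n x)
    ((continuousMultilinearCurryLeftEquiv ℝ (fun _ => E) F).continuous.comp_aestronglyMeasurable
      (integrable_iteratedFDeriv_slice μ Φ (n + 1) x).aestronglyMeasurable)
    (.of_forall fun u y _ => ?_) (μ.integrable_pow_neg_integrablePower.const_mul C)
    (.of_forall fun u y _ => (hslice u).ftaylorSeries.fderiv n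
      (by exact_mod_cast ENat.natCast_lt_top n) y)
  simpa [ftaylorSeries] using hC y u

lemma hasFTaylorSeriesUpTo_integral_slice (Φ : 𝓢(E × V, F)) :
    HasFTaylorSeriesUpTo ∞ (fun x => ∫ u, Φ (x, u) ∂μ)
      fun x n => ∫ u, iteratedFDeriv ℝ n (fun y => Φ (y, u)) x ∂μ where
  zero_eq _ :=
    ((continuousMultilinearCurryFin0 ℝ E F).toContinuousLinearEquiv.integral_comp_comm _).symm
  fderiv n _ x := hasFDerivAt_integral_iteratedFDeriv_slice μ Φ n x
  cont n _ := continuous_iff_continuousAt.2 fun x =>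
    (hasFDerivAt_integral_iteratedFDeriv_slice μ Φ n x).continuousAt

/-- The partial integral `x ↦ ∫ Φ(x, u) dμ(u)` of a Schwartz function on a product, as a
Schwartz function. -/
noncomputable def schwartzIntegralSnd (Φ : 𝓢(E × V, F)) : 𝓢(E, F) where
  toFun x := ∫ u, Φ (x, u) ∂μ
  smooth' := (hasFTaylorSeriesUpTo_integral_slice μ Φ).contDiff
  decay' k n := by
    obtain ⟨C, hC⟩ := exists_pow_mul_norm_iteratedFDeriv_slice_le Φ k μ.integrablePower n
    refine ⟨∫ u, C * (1 + ‖u‖) ^ (-(μ.integrablePower : ℝ)) ∂μ, fun x => ?_⟩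
    rw [← (hasFTaylorSeriesUpTo_integral_slice μ Φ).eq_iteratedFDeriv
      (by exact_mod_cast le_top) x]
    calc ‖x‖ ^ k * ‖∫ u, iteratedFDeriv ℝ n (fun y => Φ (y, u)) x ∂μ‖
        ≤ ‖x‖ ^ k * ∫ u, ‖iteratedFDeriv ℝ n (fun y => Φ (y, u)) x‖ ∂μ := by
          gcongr
          exact norm_integral_le_integral_norm _
      _ = ∫ u, ‖x‖ ^ k * ‖iteratedFDeriv ℝ n (fun y => Φ (y, u)) x‖ ∂μ :=
          (integral_const_mul _ _).symm
      _ ≤ _ := integral_mono ((integrable_iteratedFDeriv_slice μ Φ n x).norm.const_mul _)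
          (μ.integrable_pow_neg_integrablePower.const_mul C) (hC x)

@[simp]
lemma schwartzIntegralSnd_apply (Φ : 𝓢(E × V, F)) (x : E) :
    schwartzIntegralSnd μ Φ x = ∫ u, Φ (x, u) ∂μ := rfl

end PartialIntegral

section TensorProduct

lemma norm_prod_pow_le {E V : Type*} [SeminormedAddCommGroup E] [SeminormedAddCommGroup V]
    (p : E × V) (k : ℕ) : ‖p‖ ^ k ≤ ‖p.1‖ ^ k + ‖p.2‖ ^ k := by
  rw [Prod.norm_def]
  rcases max_choice ‖p.1‖ ‖p.2‖ with hmax | hmax <;> rw [hmax] <;> simp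

variable {E F V G H : Type*} [NormedAddCommGroup E] [NormedSpace ℝ E] [NormedAddCommGroup F]
  [NormedSpace ℝ F] [NormedAddCommGroup V] [NormedSpace ℝ V] [NormedAddCommGroup G]
  [NormedSpace ℝ G] [NormedAddCommGroup H] [NormedSpace ℝ H]

lemma pow_mul_norm_iteratedFDeriv_tensor_le (B : F →L[ℝ] G →L[ℝ] H) (f : 𝓢(E, F)) (g : 𝓢(V, G))
    (k n : ℕ) (p : E × V) :
    ‖p‖ ^ k * ‖iteratedFDeriv ℝ n (fun q : E × V => B (f q.1) (g q.2)) p‖ ≤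
      ‖B‖ * ∑ i ∈ Finset.range (n + 1), n.choose i *
        (SchwartzMap.seminorm ℝ k i f * SchwartzMap.seminorm ℝ 0 (n - i) g +
          SchwartzMap.seminorm ℝ 0 i f * SchwartzMap.seminorm ℝ k (n - i) g) := by
  have hB := B.norm_iteratedFDeriv_le_of_bilinear (N := ∞) ((f.smooth ⊤).comp contDiff_fst)
    ((g.smooth ⊤).comp contDiff_snd) p (n := n) (by exact_mod_cast le_top)
  refine (mul_le_mul_of_nonneg_left hB (by positivity)).trans ?_
  rw [mul_left_comm, Finset.mul_sum]
  refine mul_le_mul_of_nonneg_left (Finset.sum_le_sum fun i _ => ?_) (norm_nonneg B)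
  have hf : ‖iteratedFDeriv ℝ i (fun q : E × V => f q.1) p‖ ≤ ‖iteratedFDeriv ℝ i f p.1‖ :=
    norm_iteratedFDeriv_comp_clm_le (f.smooth i) (ContinuousLinearMap.norm_fst_le ℝ E V) p
  have hg : ‖iteratedFDeriv ℝ (n - i) (fun q : E × V => g q.2) p‖ ≤
      ‖iteratedFDeriv ℝ (n - i) g p.2‖ :=
    norm_iteratedFDeriv_comp_clm_le (g.smooth _) (ContinuousLinearMap.norm_snd_le ℝ E V) p
  calc ‖p‖ ^ k * (n.choose i * ‖iteratedFDeriv ℝ i (fun q : E × V => f q.1) p‖ *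
        ‖iteratedFDeriv ℝ (n - i) (fun q : E × V => g q.2) p‖)
      ≤ (‖p.1‖ ^ k + ‖p.2‖ ^ k) * (n.choose i * ‖iteratedFDeriv ℝ i f p.1‖ *
        ‖iteratedFDeriv ℝ (n - i) g p.2‖) := by
        gcongr
        exact norm_prod_pow_le p k
    _ = n.choose i *
        ((‖p.1‖ ^ k * ‖iteratedFDeriv ℝ i f p.1‖) * ‖iteratedFDeriv ℝ (n - i) g p.2‖ +
          ‖iteratedFDeriv ℝ i f p.1‖ * (‖p.2‖ ^ k * ‖iteratedFDeriv ℝ (n - i) g p.2‖)) := by ring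
    _ ≤ _ := by
        gcongr
        exacts [f.le_seminorm ℝ k i p.1, g.norm_iteratedFDeriv_le_seminorm ℝ _ p.2,
          f.norm_iteratedFDeriv_le_seminorm ℝ i p.1, g.le_seminorm ℝ k _ p.2]

/-- The tensor product `(x, y) ↦ B (f x) (g y)` of two Schwartz functions along a bounded bilinear
map `B`, as a Schwartz function on the product space. -/
noncomputable def schwartzTensor (B : F →L[ℝ] G →L[ℝ] H) (f : 𝓢(E, F)) (g : 𝓢(V, G)) :
    𝓢(E × V, H) where
  toFun p := B (f p.1) (g p.2)
  smooth' := B.isBoundedBilinearMap.contDiff.comp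
    (((f.smooth ⊤).comp contDiff_fst).prodMk ((g.smooth ⊤).comp contDiff_snd))
  decay' k n := ⟨_, pow_mul_norm_iteratedFDeriv_tensor_le B f g k n⟩

@[simp]
lemma schwartzTensor_apply (B : F →L[ℝ] G →L[ℝ] H) (f : 𝓢(E, F)) (g : 𝓢(V, G)) (p : E × V) :
    schwartzTensor B f g p = B (f p.1) (g p.2) := rfl

end TensorProduct

section TemperatePhase

lemma iteratedDeriv_fourierChar (n : ℕ) :
    iteratedDeriv n (fun t : ℝ => (𝐞 t : ℂ)) = fun t => (2 * π * Complex.I) ^ n * 𝐞 t := by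
  induction n with
  | zero => simp
  | succ n ih =>
    ext t
    rw [iteratedDeriv_succ, ih, ((hasDerivAt_fourierChar t).const_mul _).deriv]
    ring

lemma hasTemperateGrowth_fourierChar : Function.HasTemperateGrowth fun t : ℝ => (𝐞 t : ℂ) := by
  refine ⟨?_, fun n => ⟨0, (2 * π) ^ n, fun t => ?_⟩⟩
  · simp only [fourierChar_apply]
    exact ((Complex.ofRealCLM.contDiff.comp (contDiff_const.mul contDiff_id)).mul
      contDiff_const).cexp
  · rw [norm_iteratedFDeriv_eq_norm_iteratedDeriv, iteratedDeriv_fourierChar]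
    simp [abs_of_pos pi_pos, Circle.norm_coe]

variable {E V : Type*} [NormedAddCommGroup E] [NormedSpace ℝ E] [NormedAddCommGroup V]
  [NormedSpace ℝ V]

lemma hasTemperateGrowth_fourierChar_bilin (L : E →L[ℝ] V →L[ℝ] ℝ) :
    Function.HasTemperateGrowth fun p : E × V => (𝐞 (L p.1 p.2) : ℂ) :=
  hasTemperateGrowth_fourierChar.comp <| L.bilinear_hasTemperateGrowth
    (ContinuousLinearMap.fst ℝ E V).hasTemperateGrowth
    (ContinuousLinearMap.snd ℝ E V).hasTemperateGrowth

end TemperatePhase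

section FourierIntegral

variable {E V W : Type*} [NormedAddCommGroup E] [NormedSpace ℂ E]
  [NormedAddCommGroup V] [NormedSpace ℝ V]
  [NormedAddCommGroup W] [NormedSpace ℝ W]

lemma exists_norm_le_one_norm_le_two_mul_norm_apply (φ : V →L[ℝ] ℝ) :
    ∃ v : V, ‖v‖ ≤ 1 ∧ ‖φ‖ ≤ 2 * |φ v| := by
  rcases (norm_nonneg φ).eq_or_lt with hφ | hφ
  · exact ⟨0, by simp, by simp [← hφ]⟩
  · obtain ⟨v, hv, hφv⟩ := φ.exists_lt_apply_of_lt_opNorm (half_lt_self hφ)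
    exact ⟨v, hv.le, by linarith [norm_eq_abs (φ v)]⟩

lemma exists_norm_le_mul_abs_pairing [FiniteDimensional ℝ V] {L : V →L[ℝ] W →L[ℝ] ℝ}
    (hL : Function.Injective L.flip) : ∃ C : ℝ, 0 ≤ C ∧ ∀ w, ∃ v, ‖v‖ ≤ 1 ∧ ‖w‖ ≤ C * |L v w| := by
  have : FiniteDimensional ℝ W := .of_injective L.flip.toLinearMap hL
  obtain ⟨K, -, hK⟩ := (L.flip : W →ₗ[ℝ] V →L[ℝ] ℝ).injective_iff_antilipschitz.1 hL
  refine ⟨K * 2, by positivity, fun w => ?_⟩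
  obtain ⟨v, hv, hLv⟩ := exists_norm_le_one_norm_le_two_mul_norm_apply (L.flip w)
  refine ⟨v, hv, (hK.le_mul_norm (map_zero _) w).trans ?_⟩
  rw [mul_assoc]
  gcongr
  exact hLv

variable [FiniteDimensional ℝ V] [MeasurableSpace V] [BorelSpace V] (μ : Measure V)
  [μ.IsAddHaarMeasure]

lemma exists_pow_mul_norm_iteratedFDeriv_fourierIntegral_le {L : V →L[ℝ] W →L[ℝ] ℝ}
    (hL : Function.Injective L.flip) (f : 𝓢(V, E)) (k n : ℕ) :
    ∃ C : ℝ, ∀ w, ‖w‖ ^ k *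
      ‖iteratedFDeriv ℝ n (VectorFourier.fourierIntegral 𝐞 μ L.toLinearMap₁₂ f) w‖ ≤ C := by
  obtain ⟨C, hC, hCL⟩ := exists_norm_le_mul_abs_pairing hL
  refine ⟨C ^ k * (1 * (2 * π * ‖L‖) ^ n * (2 * n + 2) ^ k *
    ∑ p ∈ Finset.range (n + 1) ×ˢ Finset.range (k + 1),
      ∫ v, ‖v‖ ^ p.1 * ‖iteratedFDeriv ℝ p.2 f v‖ ∂μ), fun w => ?_⟩
  obtain ⟨v, hv, hwv⟩ := hCL w
  calc ‖w‖ ^ k * ‖iteratedFDeriv ℝ n (VectorFourier.fourierIntegral 𝐞 μ L.toLinearMap₁₂ f) w‖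
      ≤ (C * |L v w|) ^ k *
          ‖iteratedFDeriv ℝ n (VectorFourier.fourierIntegral 𝐞 μ L.toLinearMap₁₂ f) w‖ := by
        gcongr
    _ = C ^ k * (|L v w| ^ k *
          ‖iteratedFDeriv ℝ n (VectorFourier.fourierIntegral 𝐞 μ L.toLinearMap₁₂ f) w‖) := by ring
    _ ≤ C ^ k * (‖v‖ ^ k * (2 * π * ‖L‖) ^ n * (2 * n + 2) ^ k *
          ∑ p ∈ Finset.range (n + 1) ×ˢ Finset.range (k + 1),
            ∫ v, ‖v‖ ^ p.1 * ‖iteratedFDeriv ℝ p.2 f v‖ ∂μ) := by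
        refine mul_le_mul_of_nonneg_left ?_ (by positivity)
        exact VectorFourier.pow_mul_norm_iteratedFDeriv_fourierIntegral_le (K := ⊤) (N := ⊤) L
          (f.smooth ⊤) (fun i j _ _ => f.integrable_pow_mul_iteratedFDeriv μ i j) le_top le_top v w
    _ ≤ _ := by
        gcongr
        exact pow_le_one₀ (norm_nonneg v) hv

/-- The Fourier transform of a Schwartz function on `V` with respect to a pairing `L` of `V` with
`W` that is nondegenerate in `W`, as a Schwartz function on `W`. -/
noncomputable def schwartzFourierIntegral {L : V →L[ℝ] W →L[ℝ] ℝ}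
    (hL : Function.Injective L.flip) (f : 𝓢(V, E)) : 𝓢(W, E) where
  toFun := VectorFourier.fourierIntegral 𝐞 μ L.toLinearMap₁₂ f
  smooth' := VectorFourier.contDiff_fourierIntegral L fun n _ => f.integrable_pow_mul μ n
  decay' := exists_pow_mul_norm_iteratedFDeriv_fourierIntegral_le μ hL f

lemma coe_schwartzFourierIntegral {L : V →L[ℝ] W →L[ℝ] ℝ}
    (hL : Function.Injective L.flip) (f : 𝓢(V, E)) :
    ⇑(schwartzFourierIntegral μ hL f) = VectorFourier.fourierIntegral 𝐞 μ L.toLinearMap₁₂ f := rfl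

end FourierIntegral

section StarProduct

variable {V : Type*} [NormedAddCommGroup V] [NormedSpace ℝ V]

/-- The Weyl operator `W(u)`: translation by `u` followed by the modulation by the phase
`e^{2πi L(x, u)}`. -/
noncomputable def weylOperator (L : V →L[ℝ] V →L[ℝ] ℝ) (u : V) (f : V → ℂ) (x : V) : ℂ :=
  𝐞 (L x u) * f (x + u)

lemma weylOperator_weylOperator (L : V →L[ℝ] V →L[ℝ] ℝ) (u s : V) (f : V → ℂ) (x : V) :
    weylOperator L u (weylOperator L s f) x = 𝐞 (L u s) * weylOperator L (u + s) f x := by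
  simp only [weylOperator, map_add, add_apply, AddChar.map_add_eq_mul, Circle.coe_mul,
    add_assoc]
  ring

lemma integrable_fourierChar_mul {X : Type*} [TopologicalSpace X] [MeasurableSpace X]
    [OpensMeasurableSpace X] {ν : Measure X} {F : X → ℂ} {φ : X → ℝ}
    (hF : Integrable F ν) (hφ : Continuous φ) : Integrable (fun x => 𝐞 (φ x) * F x) ν :=
  hF.bdd_mul (c := 1)
    (hasTemperateGrowth_fourierChar.1.continuous.comp hφ).aestronglyMeasurable
    (.of_forall fun _ => (Circle.norm_coe _).le)

variable [MeasurableSpace V] (μ : Measure V)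

/-- The superposition `∫ H(u) W(u) f dμ(u)` of Weyl operators with weight `H`. -/
noncomputable def weylIntegral (L : V →L[ℝ] V →L[ℝ] ℝ) (H f : V → ℂ) (x : V) : ℂ :=
  ∫ u, H u * weylOperator L u f x ∂μ

lemma weylOperator_weylIntegral (L : V →L[ℝ] V →L[ℝ] ℝ) (u : V) (G f : V → ℂ) (x : V) :
    weylOperator L u (weylIntegral μ L G f) x =
      ∫ s, G s * weylOperator L u (weylOperator L s f) x ∂μ := by
  simp only [weylOperator, weylIntegral, ← integral_const_mul, mul_left_comm]

/-- The convolution of `G` and `H` twisted by the cocycle `e^{2πi L}` of the Weyl operators. -/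
noncomputable def twistedConvolution (L : V →L[ℝ] V →L[ℝ] ℝ) (G H : V → ℂ) (t : V) : ℂ :=
  ∫ u, 𝐞 (L u (t - u)) * (G (t - u) * H u) ∂μ

/-- The star product of `f` and `g` with phase `e^{-2πi L(v, u)}`. The Moyal product is, up to
normalization, the case of the pairing `L(v, u) = π⁻¹ ⟨u, Θ⁻¹ v⟩`. -/
noncomputable def starProduct (L : V →L[ℝ] V →L[ℝ] ℝ) (f g : V → ℂ) (x : V) : ℂ :=
  ∫ u, ∫ v, 𝐞 (-L v u) * (f (x + u) * g (x + v)) ∂μ ∂μ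

lemma starProduct_const_mul_left (L : V →L[ℝ] V →L[ℝ] ℝ) (c : ℂ) (f g : V → ℂ) :
    starProduct μ L (fun x => c * f x) g = fun x => c * starProduct μ L f g x := by
  ext x
  simp only [starProduct, ← integral_const_mul]
  congr! 4
  ring

lemma starProduct_const_mul_right (L : V →L[ℝ] V →L[ℝ] ℝ) (c : ℂ) (f g : V → ℂ) :
    starProduct μ L f (fun x => c * g x) = fun x => c * starProduct μ L f g x := by
  ext x
  simp only [starProduct, ← integral_const_mul]
  congr! 4
  ring

variable [BorelSpace V] [μ.IsAddRightInvariant]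

lemma integral_fourierChar_mul_comp_add_right (L : V →L[ℝ] V →L[ℝ] ℝ) (g : V → ℂ) (x w : V) :
    ∫ v, 𝐞 (-L v w) * g (v + x) ∂μ =
      𝐞 (L x w) * VectorFourier.fourierIntegral 𝐞 μ L.toLinearMap₁₂ g w :=
  congrFun (VectorFourier.fourierIntegral_comp_add_right 𝐞 μ L.toLinearMap₁₂ g x) w

lemma starProduct_eq_weylIntegral (L : V →L[ℝ] V →L[ℝ] ℝ) (f g : V → ℂ) :
    starProduct μ L f g =
      weylIntegral μ L (VectorFourier.fourierIntegral 𝐞 μ L.toLinearMap₁₂ g) f := by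
  ext x
  refine integral_congr_ae (.of_forall fun u => ?_)
  calc ∫ v, 𝐞 (-L v u) * (f (x + u) * g (x + v)) ∂μ
      = f (x + u) * ∫ v, 𝐞 (-L v u) * g (v + x) ∂μ := by
        rw [← integral_const_mul]
        simp only [add_comm x, mul_left_comm]
    _ = _ := by
        rw [integral_fourierChar_mul_comp_add_right]
        simp only [weylOperator]
        ring

variable [SecondCountableTopology V] [SFinite μ]

lemma fourierIntegral_weylIntegral (L : V →L[ℝ] V →L[ℝ] ℝ) {g H : V → ℂ} (hg : Integrable g μ)
    (hH : Integrable H μ) :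
    VectorFourier.fourierIntegral 𝐞 μ L.toLinearMap₁₂ (weylIntegral μ L H g) =
      twistedConvolution μ L (VectorFourier.fourierIntegral 𝐞 μ L.toLinearMap₁₂ g) H := by
  ext w
  have hint : Integrable (Function.uncurry fun x u => 𝐞 (-L x (w - u)) * (g (x + u) * H u))
      (μ.prod μ) :=
    integrable_fourierChar_mul
      ((measurePreserving_add_prod μ μ).integrable_comp_of_integrable (hg.mul_prod hH))
      (φ := fun p : V × V => -L p.1 (w - p.2)) (by fun_prop)
  calc ∫ x, 𝐞 (-L x w) • weylIntegral μ L H g x ∂μ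
      = ∫ x, ∫ u, 𝐞 (-L x (w - u)) * (g (x + u) * H u) ∂μ ∂μ := by
        refine integral_congr_ae (.of_forall fun x => ?_)
        simp only [Circle.smul_def, smul_eq_mul, weylIntegral, ← integral_const_mul]
        refine integral_congr_ae (.of_forall fun u => ?_)
        have hphase : -L x (w - u) = -L x w + L x u := by rw [map_sub]; ring
        simp only [weylOperator, hphase, AddChar.map_add_eq_mul, Circle.coe_mul]
        ring
    _ = ∫ u, ∫ x, 𝐞 (-L x (w - u)) * (g (x + u) * H u) ∂μ ∂μ := integral_integral_swap hint
    _ = twistedConvolution μ L (VectorFourier.fourierIntegral 𝐞 μ L.toLinearMap₁₂ g) H w := by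
        simp only [← mul_assoc, integral_mul_const, integral_fourierChar_mul_comp_add_right,
          twistedConvolution]

lemma weylIntegral_weylIntegral (L : V →L[ℝ] V →L[ℝ] ℝ) {f G H : V → ℂ} {C : ℝ}
    (hf : AEStronglyMeasurable f μ) (hC : ∀ x, ‖f x‖ ≤ C) (hG : Integrable G μ)
    (hH : Integrable H μ) :
    weylIntegral μ L H (weylIntegral μ L G f) =
      weylIntegral μ L (twistedConvolution μ L G H) f := by
  ext x
  have hW : AEStronglyMeasurable (fun t => weylOperator L t f x) μ :=
    (hasTemperateGrowth_fourierChar.1.continuous.comp (L x).continuous).aestronglyMeasurable.mul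
      (by simpa only [add_comm x] using!
        hf.comp_measurePreserving (measurePreserving_add_right μ x))
  have hint : Integrable (Function.uncurry fun t u =>
      𝐞 (L u (t - u)) * (G (t - u) * H u) * weylOperator L t f x) (μ.prod μ) := by
    refine Integrable.mul_bdd (c := C) ?_ hW.comp_fst (.of_forall fun p => ?_)
    · exact integrable_fourierChar_mul
        ((measurePreserving_sub_prod μ μ).integrable_comp_of_integrable (hG.mul_prod hH))
        (φ := fun p : V × V => L p.2 (p.1 - p.2)) (by fun_prop)
    · simpa [weylOperator, Circle.norm_coe] using hC (x + p.1)
  symm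
  calc weylIntegral μ L (twistedConvolution μ L G H) f x
      = ∫ t, ∫ u, 𝐞 (L u (t - u)) * (G (t - u) * H u) * weylOperator L t f x ∂μ ∂μ := by
        simp only [weylIntegral, twistedConvolution, integral_mul_const]
    _ = ∫ u, ∫ t, 𝐞 (L u (t - u)) * (G (t - u) * H u) * weylOperator L t f x ∂μ ∂μ :=
        integral_integral_swap hint
    _ = ∫ u, ∫ s, 𝐞 (L u s) * (G s * H u) * weylOperator L (u + s) f x ∂μ ∂μ := by
        refine integral_congr_ae (.of_forall fun u => ?_)
        simpa only [add_sub_cancel] using integral_sub_right_eq_self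
          (fun s => 𝐞 (L u s) * (G s * H u) * weylOperator L (u + s) f x) u
    _ = weylIntegral μ L H (weylIntegral μ L G f) x := by
        rw [weylIntegral]
        simp only [weylOperator_weylIntegral, weylOperator_weylOperator, ← integral_const_mul]
        congr! 4
        ring

theorem starProduct_assoc (L : V →L[ℝ] V →L[ℝ] ℝ) {f g h : V → ℂ} {C : ℝ}
    (hf : AEStronglyMeasurable f μ) (hC : ∀ x, ‖f x‖ ≤ C) (hg : Integrable g μ)
    (hg' : Integrable (VectorFourier.fourierIntegral 𝐞 μ L.toLinearMap₁₂ g) μ)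
    (hh' : Integrable (VectorFourier.fourierIntegral 𝐞 μ L.toLinearMap₁₂ h) μ) :
    starProduct μ L (starProduct μ L f g) h = starProduct μ L f (starProduct μ L g h) := by
  simp only [starProduct_eq_weylIntegral]
  rw [weylIntegral_weylIntegral μ L hf hC hg' hh', fourierIntegral_weylIntegral μ L hg hh']

end StarProduct

section SchwartzStarProduct

variable {V : Type*} [NormedAddCommGroup V] [NormedSpace ℝ V] [MeasurableSpace V] [BorelSpace V]
  (μ : Measure V)

/-- The superposition `weylIntegral` of Weyl operators, with Schwartz weight, of a Schwartz
function, as a Schwartz function: the partial integral of the pullback of `H ⊗ f` under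
`(x, u) ↦ (u, x + u)`, multiplied by the phase `e^{2πi L(x, u)}`. -/
noncomputable def schwartzWeylIntegral [SecondCountableTopology V] [μ.HasTemperateGrowth]
    (L : V →L[ℝ] V →L[ℝ] ℝ) (H f : 𝓢(V, ℂ)) : 𝓢(V, ℂ) :=
  schwartzIntegralSnd μ <| SchwartzMap.smulLeftCLM ℂ (fun p : V × V => (𝐞 (L p.1 p.2) : ℂ)) <|
    SchwartzMap.compCLMOfContinuousLinearEquiv ℝ
      ((ContinuousLinearEquiv.prodComm ℝ V V).trans
        ((ContinuousLinearEquiv.refl ℝ V).skewProd (.refl ℝ V) (.id ℝ V)))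
      (schwartzTensor (ContinuousLinearMap.mul ℝ ℂ) H f)

lemma coe_schwartzWeylIntegral [SecondCountableTopology V] [μ.HasTemperateGrowth]
    (L : V →L[ℝ] V →L[ℝ] ℝ) (H f : 𝓢(V, ℂ)) :
    ⇑(schwartzWeylIntegral μ L H f) = weylIntegral μ L H f := by
  ext x
  simp [schwartzWeylIntegral, weylIntegral, weylOperator, mul_left_comm,
    SchwartzMap.smulLeftCLM_apply_apply (hasTemperateGrowth_fourierChar_bilin L)]

variable [FiniteDimensional ℝ V] [μ.IsAddHaarMeasure]

/-- The star product of two Schwartz functions along a nondegenerate pairing, as a Schwartz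
function. -/
noncomputable def schwartzStarProduct {L : V →L[ℝ] V →L[ℝ] ℝ} (hL : Function.Injective L.flip)
    (f g : 𝓢(V, ℂ)) : 𝓢(V, ℂ) :=
  schwartzWeylIntegral μ L (schwartzFourierIntegral μ hL g) f

lemma coe_schwartzStarProduct {L : V →L[ℝ] V →L[ℝ] ℝ} (hL : Function.Injective L.flip)
    (f g : 𝓢(V, ℂ)) : ⇑(schwartzStarProduct μ hL f g) = starProduct μ L f g := by
  rw [schwartzStarProduct, coe_schwartzWeylIntegral, coe_schwartzFourierIntegral,
    starProduct_eq_weylIntegral]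

lemma starProduct_assoc_of_schwartz {L : V →L[ℝ] V →L[ℝ] ℝ} (hL : Function.Injective L.flip)
    (f g h : 𝓢(V, ℂ)) :
    starProduct μ L (starProduct μ L f g) h = starProduct μ L f (starProduct μ L g h) :=
  starProduct_assoc μ L f.continuous.aestronglyMeasurable (f.norm_le_seminorm ℝ) g.integrable
    (schwartzFourierIntegral μ hL g).integrable (schwartzFourierIntegral μ hL h).integrable

end SchwartzStarProduct

section Moyal

variable {n : ℕ}

/-- The pairing `(v, u) ↦ π⁻¹ ⟨u, Θ⁻¹ v⟩`, whose phase `e^{-2πi L(v, u)}` is that of the Moyal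
product. -/
noncomputable def moyalPairing (Θ : Matrix (Fin n) (Fin n) ℝ) :
    (Fin n → ℝ) →L[ℝ] (Fin n → ℝ) →L[ℝ] ℝ :=
  (Matrix.toLinearMap₂' ℝ (π⁻¹ • Θ⁻¹)).flip.toContinuousBilinearMap

lemma moyalPairing_apply (Θ : Matrix (Fin n) (Fin n) ℝ) (v u : Fin n → ℝ) :
    moyalPairing Θ v u = π⁻¹ * (u ⬝ᵥ Θ⁻¹.mulVec v) := by
  simp [moyalPairing, Matrix.toLinearMap₂'_apply']

lemma injective_flip_moyalPairing {Θ : Matrix (Fin n) (Fin n) ℝ} (hΘ : IsUnit Θ.det) :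
    Function.Injective (moyalPairing Θ).flip := by
  refine (injective_iff_map_eq_zero _).2 fun u hu => dotProduct_eq_zero u fun w => ?_
  have hw := DFunLike.congr_fun hu (Θ.mulVec w)
  simpa [moyalPairing_apply, Matrix.mulVec_mulVec, Matrix.nonsing_inv_mul Θ hΘ, pi_ne_zero]
    using hw

lemma fourierChar_neg_moyalPairing (Θ : Matrix (Fin n) (Fin n) ℝ) (v u : Fin n → ℝ) :
    (𝐞 (-moyalPairing Θ v u) : ℂ) =
      Complex.exp (-2 * Complex.I * ((∑ i, u i * Θ⁻¹.mulVec v i : ℝ) : ℂ)) := by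
  rw [fourierChar_apply, moyalPairing_apply, dotProduct]
  congr 1
  push_cast
  field_simp

lemma moyal_eq_const_mul_starProduct (Θ : Matrix (Fin n) (Fin n) ℝ) (f g : (Fin n → ℝ) → ℂ) :
    moyal n Θ f g =
      fun x => (((π ^ n * |Θ.det|)⁻¹ : ℝ) : ℂ) * starProduct volume (moyalPairing Θ) f g x := by
  ext x
  simp only [moyal, starProduct, fourierChar_neg_moyalPairing, mul_comm]

lemma exists_schwartz_eq_moyal {Θ : Matrix (Fin n) (Fin n) ℝ} (hΘ : IsUnit Θ.det)
    (f g : 𝓢(Fin n → ℝ, ℂ)) : ∃ fg : 𝓢(Fin n → ℝ, ℂ), ⇑fg = moyal n Θ f g := by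
  refine ⟨(((π ^ n * |Θ.det|)⁻¹ : ℝ) : ℂ) •
    schwartzStarProduct volume (injective_flip_moyalPairing hΘ) f g, ?_⟩
  rw [moyal_eq_const_mul_starProduct, ← coe_schwartzStarProduct]
  rfl

end Moyal

theorem moyal_assoc_general (n : ℕ) (Θ : Matrix (Fin n) (Fin n) ℝ) (hdet : IsUnit Θ.det)
    (f g h : 𝓢(Fin n → ℝ, ℂ)) :
    (∃ fg : 𝓢(Fin n → ℝ, ℂ), ⇑fg = moyal n Θ f g) ∧
      (∃ gh : 𝓢(Fin n → ℝ, ℂ), ⇑gh = moyal n Θ g h) ∧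
      ∀ x, moyal n Θ (moyal n Θ f g) h x = moyal n Θ f (moyal n Θ g h) x := by
  refine ⟨exists_schwartz_eq_moyal hdet f g, exists_schwartz_eq_moyal hdet g h, fun x => ?_⟩
  simp only [moyal_eq_const_mul_starProduct, starProduct_const_mul_left,
    starProduct_const_mul_right,
    starProduct_assoc_of_schwartz volume (injective_flip_moyalPairing hdet)]

/-- The Moyal product of Schwartz functions is Schwartz, and the Moyal product
is associative: `(f ⋆_Θ g) ⋆_Θ h = f ⋆_Θ (g ⋆_Θ h)`. -/
theorem moyal_assoc
    (n : ℕ) (hn : 0 < n) (he : Even n)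
    (Θ : Matrix (Fin n) (Fin n) ℝ) (hskew : Θ.transpose = -Θ)
    (hdet : IsUnit Θ.det)
    (f g h : SchwartzMap (Fin n → ℝ) ℂ) :
    (∃ fg : SchwartzMap (Fin n → ℝ) ℂ, ⇑fg = moyal n Θ ⇑f ⇑g) ∧
      (∃ gh : SchwartzMap (Fin n → ℝ) ℂ, ⇑gh = moyal n Θ ⇑g ⇑h) ∧
      ∀ x : Fin n → ℝ,
        moyal n Θ (moyal n Θ ⇑f ⇑g) (⇑h) x =
          moyal n Θ (⇑f) (moyal n Θ ⇑g ⇑h) x :=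
  moyal_assoc_general n Θ hdet f g h
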